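/- arXiv:2201.03854 — 2 statements merged into one kernel-verified Lean document; each statement's English description precedes it below -/
import Mathlib

section
/- For the family 𝔤₁(λ, r, w₁, w₂) with λ ≠ 0 and r ≠ 0, the structure J is almost Kähler, i.e. dω(E,F,G) = 0 for all E, F, G ∈ 𝔤, if and only if w₁ = 0. -/
noncomputable section

/-- The bilinear antisymmetric bracket on ℝ⁴ determined by the structure constants. -/
def bk (lam r w₁ w₂ : ℝ) (E F : Fin 4 → ℝ) : Fin 4 → ℝ :=
  (E 0 * F 1 - E 1 * F 0) • (![-r, 0, 0, -(r * w₁ / lam)] : Fin 4 → ℝ) +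
  (E 0 * F 2 - E 2 * F 0) • (![0, 0, 0, -w₁] : Fin 4 → ℝ) +
  (E 0 * F 3 - E 3 * F 0) • (![0, 0, 0, 0] : Fin 4 → ℝ) +
  (E 1 * F 2 - E 2 * F 1) • (![0, 0, 0, -w₂] : Fin 4 → ℝ) +
  (E 1 * F 3 - E 3 * F 1) • (![0, 0, 0, 0] : Fin 4 → ℝ) +
  (E 2 * F 3 - E 3 * F 2) • (![0, 0, 0, -lam] : Fin 4 → ℝ)

/-- The almost Hermitian structure J with J(X)=Y, J(Y)=-X, J(Z)=W, J(W)=-Z. -/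
def Jm (E : Fin 4 → ℝ) : Fin 4 → ℝ := ![-E 1, E 0, -E 3, E 2]

/-- The standard inner product, making {X,Y,Z,W} orthonormal. -/
def ip (E F : Fin 4 → ℝ) : ℝ := E 0 * F 0 + E 1 * F 1 + E 2 * F 2 + E 3 * F 3

/-- The Kähler form ω(E,F) = ⟨JE, F⟩. -/
def om (E F : Fin 4 → ℝ) : ℝ := ip (Jm E) F

/-- The left-invariant exterior derivative of the Kähler form. -/
def dom (lam r w₁ w₂ : ℝ) (E F G : Fin 4 → ℝ) : ℝ :=
  -om (bk lam r w₁ w₂ E F) G - om (bk lam r w₁ w₂ F G) E - om (bk lam r w₁ w₂ G E) F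

theorem g1_almostKaehler_iff (lam r w₁ w₂ : ℝ) (hlam : lam ≠ 0) (hr : r ≠ 0) :
    (∀ E F G : Fin 4 → ℝ, dom lam r w₁ w₂ E F G = 0) ↔ w₁ = 0 := by
  constructor
  · intro h
    have h1 := h ![1, 0, 0, 0] ![0, 1, 0, 0] ![0, 0, 1, 0]
    simp [dom, om, ip, Jm, bk] at h1
    tauto
  · rintro rfl E F G
    simp [dom, om, ip, Jm, bk]
    ring

end
end

section
/- For the family 𝔤₁(λ, r, w₁, w₂) with λ ≠ 0 and r ≠ 0, the structure J is integrable, i.e. the Nijenhuis tensor N(E,F) = 0 for all E, F ∈ 𝔤, if and only if w₁ = 0 and w₂ = 0. -/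
noncomputable section

/-- The Nijenhuis tensor of J. -/
def NT (lam r w₁ w₂ : ℝ) (E F : Fin 4 → ℝ) : Fin 4 → ℝ :=
  bk lam r w₁ w₂ E F + Jm (bk lam r w₁ w₂ (Jm E) F) + Jm (bk lam r w₁ w₂ E (Jm F)) -
    bk lam r w₁ w₂ (Jm E) (Jm F)

theorem g1_integrable_iff (lam r w₁ w₂ : ℝ) (hlam : lam ≠ 0) (hr : r ≠ 0) :
    (∀ E F : Fin 4 → ℝ, NT lam r w₁ w₂ E F = 0) ↔ (w₁ = 0 ∧ w₂ = 0) := by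
  constructor
  · intro h
    have h1 := h ![1, 0, 0, 0] ![0, 0, 1, 0]
    have h2 := congrFun h1 2
    have h3 := congrFun h1 3
    simp [NT, bk, Jm] at h2 h3
    exact ⟨h3, h2⟩
  · rintro ⟨rfl, rfl⟩ E F
    funext i
    fin_cases i <;> simp [NT, bk, Jm] <;> ring

end
end
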